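/- Fix a real number q with 0 < q < 1. For all Λ, Λ′ ∈ ℂ with Λ ≠ 0 and Λ′ ≠ 0, the global q-Whittaker function of type A₁ is invariant under the q-Fourier–Jackson transform: ∑_{n=0}^∞ q^{n²/2} Λⁿ Ψ̃(q^{−n/2}, Λ′) / ∏_{j=1}^n (1 − qʲ) = θ(Λ′) · Ψ̃(Λ, Λ′) / ∏_{j=1}^∞ (1 − qʲ), the series on the left converging absolutely. (The Jackson–Gauss integral formula (4.64) of the paper in the rank-one case.) -/

import Mathlib

open scoped BigOperators
open Filter

noncomputable section

/-- Symmetric monomial `M_r(X) = X^r + X^{-r}` for `r ≥ 1`, `M_0 = 1`. -/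
def Msym (r : ℕ) (X : ℂ) : ℂ := if r = 0 then 1 else X ^ r + X⁻¹ ^ r

/-- Continuous q-Hermite Laurent polynomial (Macdonald polynomial of type A₁ at t = 0). -/
def PbarA1 (q : ℝ) (n : ℕ) (X : ℂ) : ℂ :=
  Msym n X + ∑ j ∈ Finset.Icc 1 (n / 2),
    (∏ i ∈ Finset.range j, (1 - (q : ℂ) ^ (n - i)) / (1 - (q : ℂ) ^ (i + 1))) *
      Msym (n - 2 * j) X

/-- Global q-Whittaker function of type A₁. -/
def whitA1 (q : ℝ) (X Λ : ℂ) : ℂ :=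
  ∑' n : ℕ, ((q ^ ((n : ℝ) ^ 2 / 4) : ℝ) : ℂ) * X ^ n * PbarA1 q n Λ /
    ∏ j ∈ Finset.Icc 1 n, (1 - (q : ℂ) ^ j)

/-- Theta function `θ(Λ) = ∑_{j ∈ ℤ} q^{j²/4} Λ^j`. -/
def thetaA1 (q : ℝ) (Λ : ℂ) : ℂ :=
  ∑' j : ℤ, ((q ^ ((j : ℝ) ^ 2 / 4) : ℝ) : ℂ) * Λ ^ j

/-- Rogers Laurent polynomial (symmetric Macdonald polynomial of type A₁). -/
def RogersA1 (q : ℝ) (t : ℂ) (n : ℕ) (X : ℂ) : ℂ :=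
  Msym n X + ∑ j ∈ Finset.Icc 1 (n / 2),
    (∏ i ∈ Finset.range j,
      ((1 - (q : ℂ) ^ (n - i)) * (1 - t * (q : ℂ) ^ i)) /
      ((1 - (q : ℂ) ^ (1 + i)) * (1 - t * (q : ℂ) ^ (n - i - 1)))) *
    Msym (n - 2 * j) X

/-- Global q,t-spherical function of type A₁, with `t = s²`. -/
def sphA1 (q s : ℝ) (X Λ : ℂ) : ℂ :=
  ∑' n : ℕ, (s : ℂ) ^ n * ((q ^ ((n : ℝ) ^ 2 / 4) : ℝ) : ℂ) *
    RogersA1 q ((s : ℂ) ^ 2) n X * RogersA1 q ((s : ℂ) ^ 2) n Λ *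
    ∏ i ∈ Finset.range n,
      ((1 - (s : ℂ) ^ 2 * (q : ℂ) ^ i) * (1 - (s : ℂ) ^ 2 * (q : ℂ) ^ (i + 1))) /
      ((1 - ((s : ℂ) ^ 2) ^ 2 * (q : ℂ) ^ i) * (1 - (q : ℂ) ^ (i + 1)))

/-- Macdonald truncated theta weight function of type A₁. -/
def muA1 (q : ℝ) (t : ℂ) (X : ℂ) : ℂ :=
  ∏' j : ℕ, ((1 - X ^ 2 * (q : ℂ) ^ j) * (1 - X⁻¹ ^ 2 * (q : ℂ) ^ (j + 1))) /
    ((1 - t * X ^ 2 * (q : ℂ) ^ j) * (1 - t * X⁻¹ ^ 2 * (q : ℂ) ^ (j + 1)))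

/-!
Write `(q)_n = ∏_{j=1}^n (1 - q^j)`. The Gauss sums `S(n) = ∑_m q^{(m-n)²/4} P̄_m(X) / (q)_m`
satisfy, in `n`, the three-term recurrence of `P̄_n(X)`, because the `q`-difference equations of the
`q`-Hermite polynomials pass to the sums. Grouping the terms `X^a X^{-b}` of `S(0)` by `a - b` and
applying Cauchy's Durfee rectangle identity gives `S(0) = θ(X) / (q)_∞`. Hence
`S(n) = θ(X) / (q)_∞ · P̄_n(X)`. Since `S(n) = q^{n²/4} Ψ̃(q^{-n/2}, X)`, this turns each term of
the Jackson sum into `θ(X) / (q)_∞` times the corresponding term of the series for `Ψ̃(Λ, X)`.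
-/

section Algebra

open Finset.HasAntidiagonal

variable {K : Type*} [Field K] {p q : K}

/-- The finite `q`-Pochhammer symbol `(q; q)_n`, with the factors indexed from `1` to `n`. -/
def qPochhammer (q : K) (n : ℕ) : K := ∏ j ∈ Finset.Icc 1 n, (1 - q ^ j)

@[simp]
lemma qPochhammer_zero (q : K) : qPochhammer q 0 = 1 := by simp [qPochhammer]

lemma qPochhammer_succ (q : K) (n : ℕ) :
    qPochhammer q (n + 1) = qPochhammer q n * (1 - q ^ (n + 1)) :=
  Finset.prod_Icc_succ_top n.succ_pos _

lemma qPochhammer_eq_prod_range (q : K) (n : ℕ) :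
    qPochhammer q n = ∏ j ∈ Finset.range n, (1 - q ^ (j + 1)) := by
  rw [Finset.range_eq_Ico, Finset.prod_Ico_add' (fun j => 1 - q ^ j) 0 n 1]
  rfl

lemma one_sub_pow_succ_ne_zero (hq : ¬IsOfFinOrder q) (n : ℕ) : 1 - q ^ (n + 1) ≠ 0 := fun h =>
  hq (isOfFinOrder_iff_pow_eq_one.mpr ⟨n + 1, n.succ_pos, (sub_eq_zero.mp h).symm⟩)

lemma qPochhammer_ne_zero (hq : ¬IsOfFinOrder q) (n : ℕ) : qPochhammer q n ≠ 0 := by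
  rw [qPochhammer_eq_prod_range]
  exact Finset.prod_ne_zero_iff.mpr fun j _ => one_sub_pow_succ_ne_zero hq j

lemma one_sub_pow_div_qPochhammer_succ (hq : ¬IsOfFinOrder q) (n : ℕ) :
    (1 - q ^ (n + 1)) / qPochhammer q (n + 1) = 1 / qPochhammer q n := by
  have := one_sub_pow_succ_ne_zero hq n
  rw [qPochhammer_succ]
  field_simp

lemma prod_range_one_sub_div_eq_qPochhammer_div (hq : ¬IsOfFinOrder q) {n j : ℕ} (hj : j ≤ n) :
    ∏ i ∈ Finset.range j, (1 - q ^ (n - i)) / (1 - q ^ (i + 1)) =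
      qPochhammer q n / (qPochhammer q j * qPochhammer q (n - j)) := by
  induction j with
  | zero => simp [qPochhammer_ne_zero hq n]
  | succ j ih =>
    obtain ⟨m, rfl⟩ := Nat.exists_eq_add_of_le' hj
    have := one_sub_pow_succ_ne_zero hq m
    rw [Finset.prod_range_succ, ih (by lia), show m + (j + 1) - j = m + 1 by lia,
      Nat.add_sub_cancel, qPochhammer_succ q j, qPochhammer_succ q m]
    field_simp

/-- The continuous `q`-Hermite polynomial in homogeneous form, divided by `(q; q)_n`. At
`(x, y) = (X, X⁻¹)` it is the Laurent polynomial `P̄_n(X) / (q; q)_n`. -/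
def qHermite (q x y : K) (n : ℕ) : K :=
  ∑ ab ∈ antidiagonal n, x ^ ab.1 * y ^ ab.2 / (qPochhammer q ab.1 * qPochhammer q ab.2)

@[simp]
lemma qHermite_zero (q x y : K) : qHermite q x y 0 = 1 := by simp [qHermite]

lemma qHermite_comm (q x y : K) (n : ℕ) : qHermite q x y n = qHermite q y x n := by
  rw [qHermite, ← Finset.Nat.sum_antidiagonal_swap]
  exact Finset.sum_congr rfl fun ab _ => by simp only [Prod.fst_swap, Prod.snd_swap, mul_comm]

lemma qHermite_mul_mul (q c x y : K) (n : ℕ) :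
    qHermite q (c * x) (c * y) n = c ^ n * qHermite q x y n := by
  rw [qHermite, qHermite, Finset.mul_sum]
  refine Finset.sum_congr rfl fun ab hab => ?_
  rw [← mem_antidiagonal.mp hab]
  ring

lemma qHermite_succ_sub_mul_left (hq : ¬IsOfFinOrder q) (x y : K) (n : ℕ) :
    qHermite q x y (n + 1) - qHermite q (q * x) y (n + 1) = x * qHermite q x y n := by
  simp only [qHermite, ← Finset.sum_sub_distrib, Finset.mul_sum]
  rw [Finset.Nat.sum_antidiagonal_succ]
  simp only [pow_zero, sub_self, zero_add]
  refine Finset.sum_congr rfl fun ab _ => ?_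
  linear_combination x ^ (ab.1 + 1) * y ^ ab.2 / qPochhammer q ab.2 *
    one_sub_pow_div_qPochhammer_succ hq ab.1

lemma qHermite_succ_sub_mul_right (hq : ¬IsOfFinOrder q) (x y : K) (n : ℕ) :
    qHermite q x y (n + 1) - qHermite q x (q * y) (n + 1) = y * qHermite q x y n := by
  simpa only [qHermite_comm q _ x] using qHermite_succ_sub_mul_left hq y x n

lemma one_sub_pow_mul_qHermite_succ (hq : ¬IsOfFinOrder q) (x y : K) (n : ℕ) :
    (1 - q ^ (n + 1)) * qHermite q x y (n + 1) =
      x * qHermite q x y n + y * qHermite q (q * x) y n := by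
  linear_combination qHermite_succ_sub_mul_left hq x y n +
    qHermite_succ_sub_mul_right hq (q * x) y n + qHermite_mul_mul q q x y (n + 1)

lemma one_sub_mul_qHermite_one (hq : ¬IsOfFinOrder q) (x y : K) :
    (1 - q) * qHermite q x y 1 = x + y := by
  simpa using one_sub_pow_mul_qHermite_succ hq x y 0

lemma one_sub_pow_mul_qHermite_add_two (hq : ¬IsOfFinOrder q) (x y : K) (n : ℕ) :
    (1 - q ^ (n + 2)) * qHermite q x y (n + 2) =
      (x + y) * qHermite q x y (n + 1) - x * y * qHermite q x y n := by
  linear_combination one_sub_pow_mul_qHermite_succ hq x y (n + 1) -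
    y * qHermite_succ_sub_mul_left hq x y n

/-- The Durfee rectangle weight `q^{ab} / ((q; q)_a (q; q)_b)`: the generating function of the
partitions whose largest inscribed rectangle with side difference `a - b` has sides `a` and `b`. -/
def durfeeTerm (q : K) (a b : ℕ) : K := q ^ (a * b) / (qPochhammer q a * qPochhammer q b)

lemma durfeeTerm_comm (q : K) (a b : ℕ) : durfeeTerm q a b = durfeeTerm q b a := by
  rw [durfeeTerm, durfeeTerm, mul_comm a, mul_comm (qPochhammer q a)]

lemma one_sub_pow_mul_durfeeTerm_succ_left (hq : ¬IsOfFinOrder q) (a b : ℕ) :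
    (1 - q ^ (a + 1)) * durfeeTerm q (a + 1) b = q ^ b * durfeeTerm q a b := by
  unfold durfeeTerm
  linear_combination q ^ ((a + 1) * b) / qPochhammer q b * one_sub_pow_div_qPochhammer_succ hq a

lemma durfeeTerm_succ_left (hq : ¬IsOfFinOrder q) (a b : ℕ) :
    durfeeTerm q (a + 1) b =
      q ^ b * durfeeTerm q a b + (1 - q ^ (b + 1)) * durfeeTerm q (a + 1) (b + 1) := by
  have hright := one_sub_pow_mul_durfeeTerm_succ_left hq b (a + 1)
  rw [durfeeTerm_comm q (b + 1), durfeeTerm_comm q b] at hright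
  linear_combination one_sub_pow_mul_durfeeTerm_succ_left hq a b - hright

lemma pow_add_sq_eq_zpow_sub_sq_mul (hp0 : p ≠ 0) (a b : ℕ) :
    p ^ (a + b) ^ 2 = p ^ ((a - b : ℤ) ^ 2) * (p ^ 4) ^ (a * b) := by
  rw [← pow_mul, ← zpow_natCast, ← zpow_natCast, ← zpow_add₀ hp0]
  congr 1
  push_cast
  ring

lemma zpow_sub_add_one_sq_mul_pow (hp0 : p ≠ 0) (m : ℕ) (n : ℤ) :
    p ^ ((m - (n + 1)) ^ 2) * (p ^ 4) ^ m = (p ^ 4) ^ n * p ^ ((m - (n - 1)) ^ 2) := by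
  rw [← pow_mul, ← zpow_natCast p, ← zpow_natCast p, ← zpow_mul, ← zpow_add₀ hp0, ← zpow_add₀ hp0]
  congr 1
  push_cast
  ring

lemma zpow_sub_sq (hp0 : p ≠ 0) (m : ℕ) (n : ℤ) :
    p ^ ((m - n) ^ 2) = p ^ (n ^ 2) * (p ^ m ^ 2 * (p ^ (-2 * n)) ^ m) := by
  rw [← zpow_natCast p, ← zpow_natCast, ← zpow_mul, ← zpow_add₀ hp0, ← zpow_add₀ hp0]
  congr 1
  push_cast
  ring

lemma pow_add_sq_mul_div_qPochhammer_eq_durfeeTerm (hp0 : p ≠ 0) {X : K} (hX : X ≠ 0) (a b : ℕ) :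
    p ^ (a + b) ^ 2 * (X ^ a * X⁻¹ ^ b / (qPochhammer (p ^ 4) a * qPochhammer (p ^ 4) b)) =
      p ^ ((a - b : ℤ) ^ 2) * X ^ (a - b : ℤ) * durfeeTerm (p ^ 4) a b := by
  rw [pow_add_sq_eq_zpow_sub_sq_mul hp0, zpow_sub₀ hX, zpow_natCast, zpow_natCast, durfeeTerm,
    inv_pow]
  ring

end Algebra

section Convergence

open Finset.HasAntidiagonal

variable {K : Type*} [NormedField K] {q : K}

lemma not_isOfFinOrder_of_norm_lt_one (hq : ‖q‖ < 1) : ¬IsOfFinOrder q := fun h =>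
  hq.ne h.norm_eq_one

lemma sum_antidiagonal_pow_mul_pow_le {x y : ℝ} (hx : 0 ≤ x) (hy : 0 ≤ y) (n : ℕ) :
    ∑ ab ∈ antidiagonal n, x ^ ab.1 * y ^ ab.2 ≤ (x + y) ^ n := by
  rw [(Commute.all x y).add_pow']
  refine Finset.sum_le_sum fun ab hab => ?_
  rw [nsmul_eq_mul]
  refine le_mul_of_one_le_left (by positivity) (Nat.one_le_cast.mpr ?_)
  exact Nat.choose_pos (antidiagonal.fst_le hab)

lemma summable_pow_sq_mul_pow {r : ℝ} (hr0 : 0 ≤ r) (hr1 : r < 1) {R : ℝ} (hR : 0 ≤ R) :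
    Summable fun n : ℕ => r ^ n ^ 2 * R ^ n := by
  have hlim : Tendsto (fun n => r ^ n * R) atTop (nhds 0) := by
    simpa using (tendsto_pow_atTop_nhds_zero_of_lt_one hr0 hr1).mul_const R
  refine Summable.of_norm_bounded_eventually_nat summable_geometric_two ?_
  filter_upwards [hlim.eventually_le_const one_half_pos] with n hn
  rw [Real.norm_of_nonneg (by positivity), sq, pow_mul, ← mul_pow]
  gcongr

variable [CompleteSpace K]

lemma tendsto_inv_qPochhammer (hq : ‖q‖ < 1) :
    Tendsto (fun n => (qPochhammer q n)⁻¹) atTop (nhds (∏' j : ℕ, (1 - q ^ (j + 1)))⁻¹) := by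
  have hs : Summable fun n : ℕ => ‖-q ^ (n + 1)‖ := by
    simpa using (summable_nat_add_iff 1).mpr (summable_geometric_of_lt_one (norm_nonneg q) hq)
  have hprod : ∏' j : ℕ, (1 - q ^ (j + 1)) ≠ 0 := by
    simp only [sub_eq_add_neg]
    refine tprod_one_add_ne_zero_of_summable (fun n => ?_) hs
    rw [← sub_eq_add_neg]
    exact one_sub_pow_succ_ne_zero (not_isOfFinOrder_of_norm_lt_one hq) n
  refine Tendsto.inv₀ (Tendsto.congr (fun n => (qPochhammer_eq_prod_range q n).symm) ?_) hprod
  simp only [sub_eq_add_neg]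
  exact (multipliable_one_add_of_summable hs).hasProd.tendsto_prod_nat

lemma exists_norm_inv_qPochhammer_le (hq : ‖q‖ < 1) :
    ∃ C, 0 ≤ C ∧ ∀ n, ‖(qPochhammer q n)⁻¹‖ ≤ C := by
  obtain ⟨C, hC⟩ :=
    (Metric.isBounded_range_of_tendsto _ (tendsto_inv_qPochhammer hq)).exists_norm_le
  exact ⟨C, (norm_nonneg _).trans (hC _ ⟨0, rfl⟩), fun n => hC _ ⟨n, rfl⟩⟩

lemma exists_norm_div_qPochhammer_mul_le (hq : ‖q‖ < 1) :
    ∃ C, 0 ≤ C ∧ ∀ z a b, ‖z / (qPochhammer q a * qPochhammer q b)‖ ≤ ‖z‖ * C := by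
  obtain ⟨C, hC0, hC⟩ := exists_norm_inv_qPochhammer_le hq
  refine ⟨C * C, mul_nonneg hC0 hC0, fun z a b => ?_⟩
  rw [div_eq_mul_inv, mul_inv, norm_mul, norm_mul]
  gcongr <;> apply hC

lemma exists_norm_qHermite_le (hq : ‖q‖ < 1) (x y : K) :
    ∃ C, ∀ n, ‖qHermite q x y n‖ ≤ C * (‖x‖ + ‖y‖) ^ n := by
  obtain ⟨C, hC0, hC⟩ := exists_norm_div_qPochhammer_mul_le hq
  refine ⟨C, fun n => ?_⟩
  calc ‖qHermite q x y n‖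
      ≤ ∑ ab ∈ antidiagonal n, C * (‖x‖ ^ ab.1 * ‖y‖ ^ ab.2) :=
        norm_sum_le_of_le _ fun ab _ =>
          (hC _ _ _).trans_eq (by simp only [norm_mul, norm_pow, mul_comm])
    _ ≤ C * (‖x‖ + ‖y‖) ^ n := by
        rw [← Finset.mul_sum]
        gcongr
        exact sum_antidiagonal_pow_mul_pow_le (norm_nonneg x) (norm_nonneg y) n

lemma exists_norm_durfeeTerm_le (hq : ‖q‖ < 1) :
    ∃ C, ∀ k b, ‖durfeeTerm q (b + k) b‖ ≤ ‖q‖ ^ b * C := by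
  obtain ⟨C, hC0, hC⟩ := exists_norm_div_qPochhammer_mul_le hq
  refine ⟨C, fun k b => (hC _ _ _).trans ?_⟩
  rw [norm_pow]
  refine mul_le_mul_of_nonneg_right (pow_le_pow_of_le_one (norm_nonneg q) hq.le ?_) hC0
  nlinarith [Nat.le_mul_self b]

lemma summable_durfeeTerm (hq : ‖q‖ < 1) (k : ℕ) : Summable fun b => durfeeTerm q (b + k) b := by
  obtain ⟨C, hC⟩ := exists_norm_durfeeTerm_le hq
  exact ((summable_geometric_of_lt_one (norm_nonneg q) hq).mul_right C).of_norm_bounded (hC k)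

lemma summable_pow_mul_durfeeTerm (hq : ‖q‖ < 1) (k : ℕ) :
    Summable fun b => q ^ b * durfeeTerm q (b + k) b := by
  obtain ⟨C, hC⟩ := exists_norm_durfeeTerm_le hq
  refine ((summable_geometric_of_lt_one (norm_nonneg q) hq).mul_right C).of_norm_bounded fun b => ?_
  rw [norm_mul, norm_pow]
  exact (mul_le_of_le_one_left (norm_nonneg _) (pow_le_one₀ (norm_nonneg q) hq.le)).trans (hC k b)

lemma tsum_durfeeTerm_succ (hq : ‖q‖ < 1) (k : ℕ) :
    ∑' b, durfeeTerm q (b + (k + 1)) b = ∑' b, durfeeTerm q (b + k) b := by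
  have hpow := summable_pow_mul_durfeeTerm hq k
  have hdiff : Summable fun b => (1 - q ^ b) * durfeeTerm q (b + k) b :=
    ((summable_durfeeTerm hq k).sub hpow).congr fun b => by ring
  have hshift : ∑' b, (1 - q ^ (b + 1)) * durfeeTerm q (b + 1 + k) (b + 1) =
      ∑' b, (1 - q ^ b) * durfeeTerm q (b + k) b := by
    rw [hdiff.tsum_eq_zero_add]
    simp
  calc ∑' b, durfeeTerm q (b + (k + 1)) b
      = ∑' b, (q ^ b * durfeeTerm q (b + k) b +
          (1 - q ^ (b + 1)) * durfeeTerm q (b + 1 + k) (b + 1)) := by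
        refine tsum_congr fun b => ?_
        rw [← add_assoc, durfeeTerm_succ_left (not_isOfFinOrder_of_norm_lt_one hq), add_right_comm]
    _ = ∑' b, q ^ b * durfeeTerm q (b + k) b + ∑' b, (1 - q ^ b) * durfeeTerm q (b + k) b := by
        rw [← hshift]
        exact hpow.tsum_add ((summable_nat_add_iff 1).mpr hdiff)
    _ = ∑' b, durfeeTerm q (b + k) b := by
        rw [← hpow.tsum_add hdiff]
        exact tsum_congr fun b => by ring

lemma tendsto_durfeeTerm (hq : ‖q‖ < 1) (b : ℕ) :
    Tendsto (fun k => durfeeTerm q (b + k) b) atTop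
      (nhds (if b = 0 then (∏' j : ℕ, (1 - q ^ (j + 1)))⁻¹ else 0)) := by
  split_ifs with hb
  · simpa [durfeeTerm, hb] using tendsto_inv_qPochhammer hq
  · have hshift : Tendsto (fun k => b + k) atTop atTop :=
      tendsto_atTop_mono (Nat.le_add_left · b) tendsto_id
    have hexp : Tendsto (fun k => (b + k) * b) atTop atTop :=
      hshift.atTop_mul_const' (Nat.pos_of_ne_zero hb)
    have hpow := (tendsto_pow_atTop_nhds_zero_of_norm_lt_one hq).comp hexp
    have hinv := (tendsto_inv_qPochhammer hq).comp hshift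
    simpa [durfeeTerm, div_eq_mul_inv, mul_comm, mul_left_comm] using
      (hpow.mul hinv).mul_const (qPochhammer q b)⁻¹

/-- Cauchy's identity. The sum does not depend on `k`, and only `b = 0` survives as `k → ∞`. -/
lemma tsum_durfeeTerm (hq : ‖q‖ < 1) (k : ℕ) :
    ∑' b, durfeeTerm q (b + k) b = (∏' j : ℕ, (1 - q ^ (j + 1)))⁻¹ := by
  have hconst (m : ℕ) : ∑' b, durfeeTerm q (b + m) b = ∑' b, durfeeTerm q (b + 0) b := by
    induction m with
    | zero => rfl
    | succ m ih => rw [tsum_durfeeTerm_succ hq, ih]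
  obtain ⟨C, hC⟩ := exists_norm_durfeeTerm_le hq
  have hlim := tendsto_tsum_of_dominated_convergence
    ((summable_geometric_of_lt_one (norm_nonneg q) hq).mul_right C) (tendsto_durfeeTerm hq)
    (Eventually.of_forall hC)
  simp only [hconst, tsum_ite_eq] at hlim
  rw [hconst, tendsto_nhds_unique tendsto_const_nhds hlim]

end Convergence

section HermiteSum

open Finset.HasAntidiagonal (mem_antidiagonal)

variable {K : Type*} [NormedField K] {p q : K}

/-- The Gauss sum of the `q`-Hermite polynomials shifted by `n`, where `q = p⁴`, so that the
Gaussian `q^{k²/4}` is the integral power `p^{k²}`. -/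
def hermiteSum (p x y : K) (n : ℤ) : K :=
  ∑' m : ℕ, p ^ ((m - n) ^ 2) * qHermite (p ^ 4) x y m

/-- The theta function `∑ q^{k²/4} X^k`, where `q = p⁴`. -/
def nomeTheta (p X : K) : K := ∑' k : ℤ, p ^ (k ^ 2) * X ^ k

/-- The global `q`-Whittaker function of type A₁ over a normed field, where `q = p⁴`. -/
def qWhittaker (p X Λ : K) : K := ∑' n : ℕ, p ^ n ^ 2 * X ^ n * qHermite (p ^ 4) Λ Λ⁻¹ n

lemma hermiteSum_comm (p x y : K) (n : ℤ) : hermiteSum p x y n = hermiteSum p y x n := by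
  simp only [hermiteSum, qHermite_comm _ x]

lemma hermiteSum_mul_mul (hp0 : p ≠ 0) (x y : K) (n : ℤ) :
    hermiteSum p (p ^ 4 * x) (p ^ 4 * y) (n + 1) = (p ^ 4) ^ n * hermiteSum p x y (n - 1) := by
  rw [hermiteSum, hermiteSum, ← tsum_mul_left]
  refine tsum_congr fun m => ?_
  rw [qHermite_mul_mul, ← mul_assoc, zpow_sub_add_one_sq_mul_pow hp0, mul_assoc]

lemma hermiteSum_eq_mul_qWhittaker (hp0 : p ≠ 0) (X : K) (n : ℤ) :
    hermiteSum p X X⁻¹ n = p ^ (n ^ 2) * qWhittaker p (p ^ (-2 * n)) X := by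
  rw [hermiteSum, qWhittaker, ← tsum_mul_left]
  refine tsum_congr fun m => ?_
  rw [zpow_sub_sq hp0]
  ring

lemma norm_pow_four_lt_one (hp : ‖p‖ < 1) : ‖p ^ 4‖ < 1 := by
  rw [norm_pow]
  exact pow_lt_one₀ (norm_nonneg p) hp four_ne_zero

variable [CompleteSpace K]

lemma summable_norm_pow_sq_mul_pow_mul_qHermite (hp : ‖p‖ < 1) (hq : ‖q‖ < 1) (X x y : K) :
    Summable fun n : ℕ => ‖p ^ n ^ 2 * X ^ n * qHermite q x y n‖ := by
  obtain ⟨C, hC⟩ := exists_norm_qHermite_le hq x y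
  have hR : 0 ≤ ‖X‖ * (‖x‖ + ‖y‖) := by positivity
  refine ((summable_pow_sq_mul_pow (norm_nonneg p) hp hR).mul_left C).of_nonneg_of_le
    (fun _ => norm_nonneg _) fun n => ?_
  calc ‖p ^ n ^ 2 * X ^ n * qHermite q x y n‖
      = ‖p‖ ^ n ^ 2 * ‖X‖ ^ n * ‖qHermite q x y n‖ := by simp only [norm_mul, norm_pow]
    _ ≤ ‖p‖ ^ n ^ 2 * ‖X‖ ^ n * (C * (‖x‖ + ‖y‖) ^ n) := by gcongr; exact hC n
    _ = C * (‖p‖ ^ n ^ 2 * (‖X‖ * (‖x‖ + ‖y‖)) ^ n) := by rw [mul_pow ‖X‖]; ring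

lemma summable_hermiteSum (hp0 : p ≠ 0) (hp : ‖p‖ < 1) (x y : K) (n : ℤ) :
    Summable fun m : ℕ => p ^ ((m - n) ^ 2) * qHermite (p ^ 4) x y m := by
  refine ((summable_norm_pow_sq_mul_pow_mul_qHermite hp (norm_pow_four_lt_one hp) (p ^ (-2 * n))
    x y).of_norm.mul_left (p ^ (n ^ 2))).congr fun m => ?_
  rw [zpow_sub_sq hp0]
  ring

lemma hermiteSum_sub_mul_left (hp0 : p ≠ 0) (hp : ‖p‖ < 1) (x y : K) (n : ℤ) :
    hermiteSum p x y n - hermiteSum p (p ^ 4 * x) y n = x * hermiteSum p x y (n - 1) := by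
  have hq := not_isOfFinOrder_of_norm_lt_one (norm_pow_four_lt_one hp)
  have hx := summable_hermiteSum hp0 hp x y n
  have hqx := summable_hermiteSum hp0 hp (p ^ 4 * x) y n
  rw [hermiteSum, hermiteSum, ← hx.tsum_sub hqx, (hx.sub hqx).tsum_eq_zero_add, hermiteSum,
    ← tsum_mul_left]
  simp only [qHermite_zero, sub_self, zero_add, ← mul_sub, qHermite_succ_sub_mul_left hq]
  refine tsum_congr fun m => ?_
  rw [show ((m + 1 : ℕ) : ℤ) - n = m - (n - 1) by push_cast; ring]
  ring

lemma hermiteSum_sub_mul_right (hp0 : p ≠ 0) (hp : ‖p‖ < 1) (x y : K) (n : ℤ) :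
    hermiteSum p x y n - hermiteSum p x (p ^ 4 * y) n = y * hermiteSum p x y (n - 1) := by
  simpa only [hermiteSum_comm p _ x] using hermiteSum_sub_mul_left hp0 hp y x n

lemma hermiteSum_add_one (hp0 : p ≠ 0) (hp : ‖p‖ < 1) (x y : K) (n : ℤ) :
    hermiteSum p x y (n + 1) =
      (x + y) * hermiteSum p x y n + ((p ^ 4) ^ n - x * y) * hermiteSum p x y (n - 1) := by
  have hleft := hermiteSum_sub_mul_left hp0 hp x y (n + 1)
  have hright := hermiteSum_sub_mul_right hp0 hp (p ^ 4 * x) y (n + 1)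
  rw [add_sub_cancel_right] at hleft hright
  linear_combination hleft + hright + hermiteSum_mul_mul hp0 x y n -
    y * hermiteSum_sub_mul_left hp0 hp x y n

lemma summable_pow_add_sq_mul_div_qPochhammer (hp : ‖p‖ < 1) (hq : ‖q‖ < 1) (x y : K) :
    Summable fun ab : ℕ × ℕ => p ^ (ab.1 + ab.2) ^ 2 *
      (x ^ ab.1 * y ^ ab.2 / (qPochhammer q ab.1 * qPochhammer q ab.2)) := by
  obtain ⟨C, hC0, hC⟩ := exists_norm_div_qPochhammer_mul_le hq
  have hsum (z : K) := summable_pow_sq_mul_pow (norm_nonneg p) hp (norm_nonneg z)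
  refine (((hsum x).mul_of_nonneg (hsum y) (fun _ => by positivity)
    (fun _ => by positivity)).mul_right C).of_norm_bounded fun ⟨a, b⟩ => ?_
  calc ‖p ^ (a + b) ^ 2 * (x ^ a * y ^ b / (qPochhammer q a * qPochhammer q b))‖
      ≤ ‖p‖ ^ (a + b) ^ 2 * (‖x ^ a * y ^ b‖ * C) := by
        rw [norm_mul, norm_pow]
        gcongr
        exact hC _ _ _
    _ ≤ ‖p‖ ^ (a ^ 2 + b ^ 2) * (‖x ^ a * y ^ b‖ * C) := by
        gcongr ?_ * _
        exact pow_le_pow_of_le_one (norm_nonneg p) hp.le (by nlinarith [Nat.zero_le (a * b)])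
    _ = ‖p‖ ^ a ^ 2 * ‖x‖ ^ a * (‖p‖ ^ b ^ 2 * ‖y‖ ^ b) * C := by
        simp only [norm_mul, norm_pow]
        ring

lemma tsum_pow_sq_mul_qHermite (hp : ‖p‖ < 1) (hq : ‖q‖ < 1) (x y : K) :
    ∑' n : ℕ, p ^ n ^ 2 * qHermite q x y n = ∑' ab : ℕ × ℕ, p ^ (ab.1 + ab.2) ^ 2 *
      (x ^ ab.1 * y ^ ab.2 / (qPochhammer q ab.1 * qPochhammer q ab.2)) := by
  let e := Finset.HasAntidiagonal.sigmaAntidiagonalEquivProd (A := ℕ)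
  have hs := e.summable_iff.mpr (summable_pow_add_sq_mul_div_qPochhammer hp hq x y)
  rw [← e.tsum_eq]
  refine Eq.trans (tsum_congr fun n => ?_) hs.tsum_sigma.symm
  rw [tsum_fintype, qHermite, Finset.mul_sum, ← Finset.sum_coe_sort]
  exact Finset.sum_congr rfl fun ab _ =>
    congrArg (p ^ · ^ 2 * _) (mem_antidiagonal.mp ab.2).symm

/-- Pairs of naturals are parametrized by their difference and their minimum. -/
def intProdNatEquiv : ℤ × ℕ ≃ ℕ × ℕ where
  toFun kc := (kc.2 + kc.1.toNat, kc.2 + (-kc.1).toNat)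
  invFun ab := (ab.1 - ab.2, min ab.1 ab.2)
  left_inv := fun ⟨k, c⟩ => by grind
  right_inv := fun ⟨a, b⟩ => by grind

lemma tsum_durfeeTerm_intProdNatEquiv (hq : ‖q‖ < 1) (k : ℤ) :
    ∑' c, durfeeTerm q (intProdNatEquiv (k, c)).1 (intProdNatEquiv (k, c)).2 =
      (∏' j : ℕ, (1 - q ^ (j + 1)))⁻¹ := by
  obtain ⟨d, rfl | rfl⟩ := k.eq_nat_or_neg
  · simpa [intProdNatEquiv] using tsum_durfeeTerm hq d
  · simpa [intProdNatEquiv, durfeeTerm_comm q _ (_ + d)] using tsum_durfeeTerm hq d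

lemma hermiteSum_zero (hp0 : p ≠ 0) (hp : ‖p‖ < 1) {X : K} (hX : X ≠ 0) :
    hermiteSum p X X⁻¹ 0 = nomeTheta p X / ∏' j : ℕ, (1 - (p ^ 4) ^ (j + 1)) := by
  have hq := norm_pow_four_lt_one hp
  have hterm (kc : ℤ × ℕ) := pow_add_sq_mul_div_qPochhammer_eq_durfeeTerm hp0 hX
    (intProdNatEquiv kc).1 (intProdNatEquiv kc).2
  have hdiff (kc : ℤ × ℕ) : ((intProdNatEquiv kc).1 - (intProdNatEquiv kc).2 : ℤ) = kc.1 :=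
    congrArg Prod.fst (intProdNatEquiv.symm_apply_apply kc)
  have hs := intProdNatEquiv.summable_iff.mpr
    (summable_pow_add_sq_mul_div_qPochhammer hp hq X X⁻¹)
  simp only [Function.comp_def, hterm, hdiff] at hs
  calc hermiteSum p X X⁻¹ 0
      = ∑' n : ℕ, p ^ n ^ 2 * qHermite (p ^ 4) X X⁻¹ n := by
        simp only [hermiteSum, sub_zero, ← Nat.cast_pow, zpow_natCast]
    _ = ∑' kc : ℤ × ℕ, p ^ (kc.1 ^ 2) * X ^ kc.1 *
          durfeeTerm (p ^ 4) (intProdNatEquiv kc).1 (intProdNatEquiv kc).2 := by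
        rw [tsum_pow_sq_mul_qHermite hp hq, ← intProdNatEquiv.tsum_eq]
        simp only [hterm, hdiff]
    _ = ∑' k : ℤ, p ^ (k ^ 2) * X ^ k * (∏' j : ℕ, (1 - (p ^ 4) ^ (j + 1)))⁻¹ := by
        rw [hs.tsum_prod]
        simp only [tsum_mul_left, tsum_durfeeTerm_intProdNatEquiv hq]
    _ = nomeTheta p X / ∏' j : ℕ, (1 - (p ^ 4) ^ (j + 1)) := by
        rw [tsum_mul_right, nomeTheta, div_eq_mul_inv]

lemma hermiteSum_natCast (hp0 : p ≠ 0) (hp : ‖p‖ < 1) {X : K} (hX : X ≠ 0) (n : ℕ) :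
    hermiteSum p X X⁻¹ n = nomeTheta p X / (∏' j : ℕ, (1 - (p ^ 4) ^ (j + 1))) *
      (qPochhammer (p ^ 4) n * qHermite (p ^ 4) X X⁻¹ n) := by
  have hq := not_isOfFinOrder_of_norm_lt_one (norm_pow_four_lt_one hp)
  have hXX := mul_inv_cancel₀ hX
  have hrec (n : ℕ) := hermiteSum_add_one hp0 hp X X⁻¹ n
  rw [← hermiteSum_zero hp0 hp hX]
  induction n using Nat.twoStepInduction with
  | zero => simp
  | one =>
    have hone := hrec 0
    simp only [Nat.cast_zero, zero_add, zpow_zero, hXX, sub_self, zero_mul, add_zero] at hone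
    rw [Nat.cast_one, hone, qPochhammer_succ, qPochhammer_zero, one_mul, zero_add, pow_one,
      one_sub_mul_qHermite_one hq, mul_comm]
  | more n ih ih_succ =>
    have hn := hrec (n + 1)
    rw [hXX, zpow_natCast, show ((n + 1 : ℕ) : ℤ) - 1 = n by push_cast; ring, ih, ih_succ] at hn
    rw [show ((n + 2 : ℕ) : ℤ) = (n + 1 : ℕ) + 1 by push_cast; ring, hn,
      qPochhammer_succ _ (n + 1), mul_assoc (qPochhammer _ _), one_sub_pow_mul_qHermite_add_two hq,
      hXX, qPochhammer_succ _ n]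
    ring

lemma qWhittaker_zpow_neg_two_mul_div (hp0 : p ≠ 0) (hp : ‖p‖ < 1) (Λ : K) {Λ' : K}
    (hΛ' : Λ' ≠ 0) (n : ℕ) :
    p ^ (2 * n ^ 2) * Λ ^ n * qWhittaker p (p ^ (-2 * n : ℤ)) Λ' / qPochhammer (p ^ 4) n =
      nomeTheta p Λ' / (∏' j : ℕ, (1 - (p ^ 4) ^ (j + 1))) *
        (p ^ n ^ 2 * Λ ^ n * qHermite (p ^ 4) Λ' Λ'⁻¹ n) := by
  have hq := not_isOfFinOrder_of_norm_lt_one (norm_pow_four_lt_one hp)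
  have hgauss := hermiteSum_natCast hp0 hp hΛ' n
  rw [hermiteSum_eq_mul_qWhittaker hp0, ← Nat.cast_pow, zpow_natCast] at hgauss
  rw [div_eq_iff (qPochhammer_ne_zero hq n)]
  linear_combination p ^ n ^ 2 * Λ ^ n * hgauss

theorem whitA1_fourier_jackson_invariance_general (hp0 : p ≠ 0) (hp : ‖p‖ < 1) (Λ : K) {Λ' : K}
    (hΛ' : Λ' ≠ 0) :
    Summable (fun n : ℕ => ‖p ^ (2 * n ^ 2) * Λ ^ n * qWhittaker p (p ^ (-2 * n : ℤ)) Λ' /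
      qPochhammer (p ^ 4) n‖) ∧
    ∑' n : ℕ, p ^ (2 * n ^ 2) * Λ ^ n * qWhittaker p (p ^ (-2 * n : ℤ)) Λ' /
      qPochhammer (p ^ 4) n =
      nomeTheta p Λ' * qWhittaker p Λ Λ' / ∏' j : ℕ, (1 - (p ^ 4) ^ (j + 1)) := by
  simp only [qWhittaker_zpow_neg_two_mul_div hp0 hp Λ hΛ']
  constructor
  · simp only [norm_mul (nomeTheta p Λ' / _)]
    exact (summable_norm_pow_sq_mul_pow_mul_qHermite hp (norm_pow_four_lt_one hp) Λ Λ'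
      Λ'⁻¹).mul_left _
  · rw [tsum_mul_left, ← qWhittaker, div_mul_eq_mul_div]

end HermiteSum

section Complex

lemma sum_range_succ_eq_sum_range_half {M : Type*} [AddCommMonoid M] (f : ℕ → M) (n : ℕ) :
    ∑ j ∈ Finset.range (n + 1), f j =
      ∑ j ∈ Finset.range (n / 2 + 1), if n = 2 * j then f j else f j + f (n - j) := by
  induction n using Nat.twoStepInduction generalizing f with
  | zero => simp
  | one => simp [Finset.sum_range_succ]
  | more n ih _ =>
    rw [Finset.sum_range_succ, Finset.sum_range_succ', ih, Nat.add_div_right n two_pos,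
      Finset.sum_range_succ' _ (n / 2).succ, add_assoc]
    congr 1
    refine Finset.sum_congr rfl fun j hj => ?_
    have := Finset.mem_range.mp hj
    simp only [show n + 2 = 2 * (j + 1) ↔ n = 2 * j by lia]
    rw [show n + 2 - (j + 1) = n - j + 1 by lia]

lemma PbarA1_eq_sum_range (q : ℝ) (n : ℕ) (X : ℂ) :
    PbarA1 q n X = ∑ j ∈ Finset.range (n / 2 + 1),
      (∏ i ∈ Finset.range j, (1 - (q : ℂ) ^ (n - i)) / (1 - (q : ℂ) ^ (i + 1))) *
        Msym (n - 2 * j) X := by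
  rw [Finset.range_eq_Ico, Finset.sum_eq_sum_Ico_succ_bot (Nat.succ_pos _)]
  simp only [Finset.range_zero, Finset.prod_empty, one_mul, mul_zero, tsub_zero]
  rfl

lemma Msym_sub_two_mul {n j : ℕ} (hj : 2 * j ≤ n) {X : ℂ} (hX : X ≠ 0) :
    Msym (n - 2 * j) X =
      if n = 2 * j then X ^ j * X⁻¹ ^ (n - j)
      else X ^ j * X⁻¹ ^ (n - j) + X ^ (n - j) * X⁻¹ ^ j := by
  obtain ⟨d, rfl⟩ := Nat.exists_eq_add_of_le hj
  have hXj : X ^ j * X⁻¹ ^ j = 1 := by rw [← mul_pow, mul_inv_cancel₀ hX, one_pow]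
  simp only [Msym, Nat.add_sub_cancel_left, show 2 * j + d - j = j + d by lia, pow_add,
    Nat.add_eq_left]
  split_ifs with hd
  · simpa [hd] using hXj.symm
  · linear_combination -(X ^ d + X⁻¹ ^ d) * hXj

lemma PbarA1_eq_qPochhammer_mul_qHermite {q : ℝ} (hq : ¬IsOfFinOrder (q : ℂ)) (n : ℕ) {X : ℂ}
    (hX : X ≠ 0) : PbarA1 q n X = qPochhammer (q : ℂ) n * qHermite (q : ℂ) X X⁻¹ n := by
  rw [PbarA1_eq_sum_range, qHermite, Finset.Nat.sum_antidiagonal_eq_sum_range_succ_mk,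
    sum_range_succ_eq_sum_range_half _ n, Finset.mul_sum]
  refine Finset.sum_congr rfl fun j hj => ?_
  have hjn : 2 * j ≤ n := by grind
  rw [prod_range_one_sub_div_eq_qPochhammer_div hq (by lia), Msym_sub_two_mul hjn hX,
    show n - (n - j) = j by lia]
  split_ifs <;> ring

lemma pow_four_rpow_eq_zpow {p : ℝ} (hp : 0 ≤ p) {x : ℝ} {k : ℤ} (hx : 4 * x = k) :
    (p ^ 4) ^ x = p ^ k := by
  rw [← Real.rpow_natCast, ← Real.rpow_mul hp, Nat.cast_ofNat, hx, Real.rpow_intCast]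

lemma thetaA1_pow_four {p : ℝ} (hp : 0 ≤ p) (X : ℂ) : thetaA1 (p ^ 4) X = nomeTheta (p : ℂ) X := by
  refine tsum_congr fun k => ?_
  rw [pow_four_rpow_eq_zpow hp (k := k ^ 2) (by push_cast; ring), Complex.ofReal_zpow]

lemma whitA1_pow_four {p : ℝ} (hp0 : 0 ≤ p) (hp1 : p < 1) (X : ℂ) {Λ : ℂ} (hΛ : Λ ≠ 0) :
    whitA1 (p ^ 4) X Λ = qWhittaker (p : ℂ) X Λ := by
  have hq : ¬IsOfFinOrder ((p ^ 4 : ℝ) : ℂ) := not_isOfFinOrder_of_norm_lt_one <| by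
    rw [Complex.norm_of_nonneg (by positivity)]
    exact pow_lt_one₀ hp0 hp1 four_ne_zero
  refine tsum_congr fun n => ?_
  rw [PbarA1_eq_qPochhammer_mul_qHermite hq n hΛ, ← qPochhammer, mul_left_comm,
    mul_div_cancel_left₀ _ (qPochhammer_ne_zero hq n),
    pow_four_rpow_eq_zpow hp0 (k := (n ^ 2 : ℕ)) (by push_cast; ring), zpow_natCast,
    Complex.ofReal_pow, Complex.ofReal_pow]

end Complex

/-- the global q-Whittaker function is invariant under the
q-Fourier–Jackson transform. -/
theorem whitA1_fourier_jackson_invariance (q : ℝ) (hq0 : 0 < q) (hq1 : q < 1)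
    (Λ Λ' : ℂ) (hΛ : Λ ≠ 0) (hΛ' : Λ' ≠ 0) :
    Summable (fun n : ℕ =>
      ‖((q ^ ((n : ℝ) ^ 2 / 2) : ℝ) : ℂ) * Λ ^ n *
        whitA1 q (((q ^ (-(n : ℝ) / 2) : ℝ) : ℂ)) Λ' /
        ∏ j ∈ Finset.Icc 1 n, (1 - (q : ℂ) ^ j)‖) ∧
    ∑' n : ℕ, ((q ^ ((n : ℝ) ^ 2 / 2) : ℝ) : ℂ) * Λ ^ n *
        whitA1 q (((q ^ (-(n : ℝ) / 2) : ℝ) : ℂ)) Λ' /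
        ∏ j ∈ Finset.Icc 1 n, (1 - (q : ℂ) ^ j) =
      thetaA1 q Λ' * whitA1 q Λ Λ' / ∏' j : ℕ, (1 - (q : ℂ) ^ (j + 1)) := by
  obtain ⟨p, hp0, hp1, rfl⟩ : ∃ p : ℝ, 0 < p ∧ p < 1 ∧ p ^ 4 = q :=
    ⟨q ^ ((4 : ℕ) : ℝ)⁻¹, by positivity, Real.rpow_lt_one hq0.le hq1 (by positivity),
      Real.rpow_inv_natCast_pow hq0.le four_ne_zero⟩
  have hgauss (n : ℕ) : (p ^ 4) ^ ((n : ℝ) ^ 2 / 2) = p ^ (2 * n ^ 2) := by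
    rw [pow_four_rpow_eq_zpow hp0.le (k := (2 * n ^ 2 : ℕ)) (by push_cast; ring), zpow_natCast]
  have hspec (n : ℕ) : (p ^ 4) ^ (-(n : ℝ) / 2) = p ^ (-2 * n : ℤ) :=
    pow_four_rpow_eq_zpow hp0.le (by push_cast; ring)
  simpa only [hgauss, hspec, thetaA1_pow_four hp0.le, whitA1_pow_four hp0.le hp1 _ hΛ',
    Complex.ofReal_pow, Complex.ofReal_zpow, qPochhammer] using
    whitA1_fourier_jackson_invariance_general (Complex.ofReal_ne_zero.mpr hp0.ne')
      ((Complex.norm_of_nonneg hp0.le).trans_lt hp1) Λ hΛ'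

end
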